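/- Let (n_k) be a strictly increasing sequence of natural numbers and γ a Radon measure on ℝ such that, writing F_m = ℙ_2 ∩ [−m, m], for every continuous compactly supported f : ℝ → ℂ one has (1/card F_{n_k})·Σ_{x,y∈F_{n_k}} f(x−y) → ∫ f dγ as k → ∞. Then γ({2}) = 1/2 if and only if there are infinitely many twin primes (i.e., infinitely many primes p with p + 2 prime). -/

import Mathlib

open Filter Topology Set MeasureTheory

/-- The set of prime numbers together with their negatives, as a subset of `ℝ`. -/
def PrimesR : Set ℝ := {x | ∃ p : ℕ, p.Prime ∧ (x = (p : ℝ) ∨ x = -(p : ℝ))}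

/-- `ℙ_2 = {p : p ∈ ℙ, p + 2 ∈ ℙ} ∪ {p + 2 : p ∈ ℙ, p + 2 ∈ ℙ}`, the twin primes and
their negatives. -/
def P2 : Set ℝ :=
  {x | (x ∈ PrimesR ∧ x + 2 ∈ PrimesR) ∨ (x - 2 ∈ PrimesR ∧ x ∈ PrimesR)}

/-- The (counting-normalised) autocorrelation sum of the finite sample `F` applied to a
test function `f`; interpreted as `0` when `F = ∅` (since then `(F.ncard : ℂ)⁻¹ = 0`). -/
noncomputable def autoCorr (F : Set ℝ) (f : ℝ → ℂ) : ℂ :=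
  ((F.ncard : ℂ))⁻¹ * ∑ᶠ x ∈ F, ∑ᶠ y ∈ F, f (x - y)

lemma ncpair (a b : ℝ) : ({a, b} : Set ℝ).ncard ≤ 2 := by
  refine (Set.ncard_insert_le _ _).trans ?_
  rw [Set.ncard_singleton]

lemma primesR_iff (x : ℝ) : x ∈ PrimesR ↔ ∃ z : ℤ, x = z ∧ z.natAbs.Prime := by
  constructor
  · rintro ⟨p, hp, h | h⟩
    · exact ⟨p, by simpa using h, by simpa using hp⟩
    · exact ⟨-p, by simpa using h, by simpa using hp⟩
  · rintro ⟨z, rfl, hz⟩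
    refine ⟨z.natAbs, hz, ?_⟩
    rcases Int.natAbs_eq z with h | h
    · left
      have h2 := congrArg (fun w : ℤ => (w : ℝ)) h
      simp only [Int.cast_natCast] at h2
      exact h2
    · right
      have h2 := congrArg (fun w : ℤ => (w : ℝ)) h
      simp only [Int.cast_natCast, Int.cast_neg] at h2
      exact h2

lemma int_five (z : ℤ) (h0 : z.natAbs.Prime) (h1 : (z - 2).natAbs.Prime)
    (h2 : (z + 2).natAbs.Prime) : z = 5 ∨ z = -5 := by
  have h3 : 3 ∣ z.natAbs ∨ 3 ∣ (z-2).natAbs ∨ 3 ∣ (z+2).natAbs := by omega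
  have g0 := h0.two_le
  have g1 := h1.two_le
  have g2 := h2.two_le
  rcases h3 with h | h | h
  · have := (Nat.prime_dvd_prime_iff_eq Nat.prime_three h0).1 h
    omega
  · have := (Nat.prime_dvd_prime_iff_eq Nat.prime_three h1).1 h
    omega
  · have := (Nat.prime_dvd_prime_iff_eq Nat.prime_three h2).1 h
    omega

lemma P2_prime {x : ℝ} (h : x ∈ P2) : x ∈ PrimesR := by
  rcases h with h | h
  · exact h.1
  · exact h.2

lemma P2_int {x : ℝ} (h : x ∈ P2) : ∃ z : ℤ, x = z ∧ z.natAbs.Prime :=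
  (primesR_iff x).1 (P2_prime h)

lemma P2_nb {x : ℝ} (h : x ∈ P2) : x - 2 ∈ P2 ∨ x + 2 ∈ P2 := by
  rcases h with h | h
  · right; right
    refine ⟨by simpa using h.1, h.2⟩
  · left; left
    exact ⟨h.1, by simpa using h.2⟩

lemma P2_five {x : ℝ} (h : x ∈ P2) (h1 : x - 2 ∈ P2) (h2 : x + 2 ∈ P2) : x = 5 ∨ x = -5 := by
  obtain ⟨z, rfl, hz⟩ := P2_int h
  obtain ⟨a, ha, ha'⟩ := P2_int h1
  obtain ⟨b, hb, hb'⟩ := P2_int h2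
  have e1 : a = z - 2 := by exact_mod_cast ha.symm
  have e2 : b = z + 2 := by exact_mod_cast hb.symm
  subst e1 e2
  rcases int_five z hz ha' hb' with h | h
  · left; rw [h]; norm_num
  · right; rw [h]; norm_num

lemma p3 : (3:ℝ) ∈ PrimesR := ⟨3, by norm_num, by norm_num⟩
lemma p5 : (5:ℝ) ∈ PrimesR := ⟨5, by norm_num, by norm_num⟩
lemma p7 : (7:ℝ) ∈ PrimesR := ⟨7, by norm_num, by norm_num⟩

abbrev FF (m : ℕ) : Set ℝ := P2 ∩ Set.Icc (-(m : ℝ)) (m : ℝ)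

lemma FF_fin (m : ℕ) : (FF m).Finite := by
  refine ((Set.finite_Icc (-(m:ℤ)) m).image (fun z : ℤ => (z:ℝ))).subset ?_
  rintro x ⟨hx, h1, h2⟩
  obtain ⟨z, rfl, -⟩ := P2_int hx
  exact ⟨z, ⟨by exact_mod_cast h1, by exact_mod_cast h2⟩, rfl⟩

def UA (F : Set ℝ) : Set ℝ := {x | x ∈ F ∧ x - 2 ∈ F}
def UB (F : Set ℝ) : Set ℝ := {x | x ∈ F ∧ x + 2 ∈ F}

lemma UAB (F : Set ℝ) : (UB F).ncard = (UA F).ncard := by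
  have : UA F = (fun x => x + 2) '' UB F := by
    ext x
    constructor
    · rintro ⟨h1, h2⟩
      exact ⟨x - 2, ⟨h2, by simpa using h1⟩, by simp⟩
    · rintro ⟨y, ⟨h1, h2⟩, rfl⟩
      exact ⟨h2, by simpa using h1⟩
  rw [this, Set.ncard_image_of_injective _ (add_left_injective 2)]

lemma UA_card {F : Set ℝ} (hF : F.Finite) :
    (UA F ∪ UB F).ncard + (UA F ∩ UB F).ncard = 2 * (UA F).ncard := by
  rw [Set.ncard_union_add_ncard_inter _ _ (hF.subset fun x h => h.1) (hF.subset fun x h => h.1),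
    UAB, two_mul]

lemma UAB_sub (F : Set ℝ) : UA F ∪ UB F ⊆ F := by
  rintro x (h | h) <;> exact h.1

lemma FF_iso (m : ℕ) : FF m \ (UA (FF m) ∪ UB (FF m)) ⊆ {(m:ℝ), (m:ℝ)-1, -(m:ℝ), -(m:ℝ)+1} := by
  rintro x ⟨⟨hx, h1, h2⟩, h3⟩
  rw [Set.mem_union, not_or] at h3
  obtain ⟨hA, hB⟩ := h3
  have key : x - 2 < -(m:ℝ) ∨ (m:ℝ) < x + 2 := by
    by_contra! hc
    rcases P2_nb hx with h | h
    · exact hA ⟨⟨hx, h1, h2⟩, h, hc.1, by linarith⟩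
    · exact hB ⟨⟨hx, h1, h2⟩, h, by linarith, hc.2⟩
  obtain ⟨z, rfl, -⟩ := P2_int hx
  have h1' : -(m:ℤ) ≤ z := by exact_mod_cast h1
  have h2' : z ≤ (m:ℤ) := by exact_mod_cast h2
  have key' : z - 2 < -(m:ℤ) ∨ (m:ℤ) < z + 2 := by exact_mod_cast key
  have : z = m ∨ z = m - 1 ∨ z = -m ∨ z = -m + 1 := by omega
  simp only [Set.mem_insert_iff, Set.mem_singleton_iff]
  exact_mod_cast this

lemma FF_bounds (m : ℕ) : 2 * (UA (FF m)).ncard ≤ (FF m).ncard + 2 ∧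
    (FF m).ncard ≤ 2 * (UA (FF m)).ncard + 4 := by
  have hF := FF_fin m
  have h0 := UA_card hF
  have h1 := Set.ncard_le_ncard (UAB_sub (FF m)) hF
  have h2 := Set.ncard_sdiff_add_ncard_of_subset (UAB_sub (FF m)) hF
  have h3 : (FF m \ (UA (FF m) ∪ UB (FF m))).ncard ≤ 4 := by
    refine (Set.ncard_le_ncard (FF_iso m) (Set.toFinite _)).trans ?_
    refine (Set.ncard_insert_le _ _).trans (Nat.succ_le_succ ?_)
    refine (Set.ncard_insert_le _ _).trans (Nat.succ_le_succ ?_)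
    exact ncpair _ _
  have h4 : (UA (FF m) ∩ UB (FF m)).ncard ≤ 2 := by
    refine (Set.ncard_le_ncard (t := {(5:ℝ), -5}) ?_ (Set.toFinite _)).trans (ncpair _ _)
    rintro x ⟨h, h'⟩
    exact P2_five h.1.1 h.2.1 h'.2.1
  omega

lemma P2_strict (hF : P2.Finite) : P2.ncard < 2 * (UA P2).ncard := by
  have h0 := UA_card hF
  have h1 : UA P2 ∪ UB P2 = P2 := by
    refine (UAB_sub _).antisymm fun x hx => ?_
    rcases P2_nb hx with h | h
    · exact Or.inl ⟨hx, h⟩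
    · exact Or.inr ⟨hx, h⟩
  have m3 : (3:ℝ) ∈ P2 := Or.inl ⟨p3, by norm_num; exact p5⟩
  have m5 : (5:ℝ) ∈ P2 := Or.inl ⟨p5, by norm_num; exact p7⟩
  have m7 : (7:ℝ) ∈ P2 := Or.inr ⟨by norm_num; exact p5, p7⟩
  have h2 : 0 < (UA P2 ∩ UB P2).ncard := by
    rw [Set.ncard_pos (hF.subset fun x h => h.1.1)]
    exact ⟨5, ⟨m5, by norm_num; exact m3⟩, ⟨m5, by norm_num; exact m7⟩⟩
  rw [h1] at h0
  omega

lemma P2_inf_iff : P2.Infinite ↔ {p : ℕ | p.Prime ∧ (p + 2).Prime}.Infinite := by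
  constructor
  · intro h hfin
    apply h
    have f1 := hfin.image (fun p : ℕ => (p:ℝ))
    have f2 := hfin.image (fun p : ℕ => (p:ℝ) + 2)
    have f3 := hfin.image (fun p : ℕ => -(p:ℝ))
    have f4 := hfin.image (fun p : ℕ => -(p:ℝ) - 2)
    have key : ∀ z : ℤ, z.natAbs.Prime → (z+2).natAbs.Prime →
        ∃ p : ℕ, p ∈ {p : ℕ | p.Prime ∧ (p + 2).Prime} ∧ (z = p ∨ z = -p - 2) := by
      intro z h1 h2
      have g1 := h1.two_le
      have g2 := h2.two_le
      rcases le_total 0 z with h | h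
      · refine ⟨z.natAbs, ⟨h1, ?_⟩, by omega⟩
        have : (z+2).natAbs = z.natAbs + 2 := by omega
        rwa [← this]
      · refine ⟨(z+2).natAbs, ⟨h2, ?_⟩, by omega⟩
        have : z.natAbs = (z+2).natAbs + 2 := by omega
        rwa [← this]
    have key2 : ∀ x : ℝ, x ∈ PrimesR → x + 2 ∈ PrimesR →
        ∃ p : ℕ, p ∈ {p : ℕ | p.Prime ∧ (p + 2).Prime} ∧ (x = p ∨ x = -p - 2) := by
      intro x h1 h2
      obtain ⟨z, rfl, hz⟩ := (primesR_iff x).1 h1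
      obtain ⟨b, hb, hb'⟩ := (primesR_iff _).1 h2
      have e2 : b = z + 2 := by exact_mod_cast hb.symm
      subst e2
      obtain ⟨p, hp, h⟩ := key z hz hb'
      exact ⟨p, hp, by exact_mod_cast h⟩
    refine (((f1.union f2).union f3).union f4).subset ?_
    rintro x (⟨h1, h2⟩ | ⟨h1, h2⟩)
    · obtain ⟨p, hp, h | h⟩ := key2 x h1 h2
      · exact Or.inl (Or.inl (Or.inl ⟨p, hp, h.symm⟩))
      · exact Or.inr ⟨p, hp, h.symm⟩
    · obtain ⟨p, hp, h | h⟩ := key2 (x-2) h1 (by simpa using h2)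
      · exact Or.inl (Or.inl (Or.inr ⟨p, hp, by simp only; linarith⟩))
      · exact Or.inl (Or.inr ⟨p, hp, by simp only; linarith⟩)
  · intro h
    refine (h.image (f := fun p : ℕ => (p:ℝ)) (Nat.cast_injective.injOn)).mono ?_
    rintro x ⟨p, ⟨h1, h2⟩, rfl⟩
    exact Or.inl ⟨⟨p, h1, Or.inl rfl⟩, ⟨p+2, h2, Or.inl (by push_cast; rfl)⟩⟩

lemma eventually_sub {t : Set ℝ} (ht : t.Finite) (ht2 : t ⊆ P2) (nk : ℕ → ℕ) (hnk : StrictMono nk) :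
    ∀ᶠ k in atTop, t ⊆ FF (nk k) := by
  obtain ⟨R, hR⟩ := ht.isBounded.exists_norm_le
  have : Tendsto (fun k => (nk k : ℝ)) atTop atTop :=
    tendsto_natCast_atTop_atTop.comp hnk.tendsto_atTop
  filter_upwards [this.eventually_ge_atTop R] with k hk x hx
  exact ⟨ht2 hx, abs_le.1 ((hR x hx).trans hk)⟩

noncomputable def tent (n : ℕ) (x : ℝ) : ℝ := max 0 (1 - ((n:ℝ) + 1) * |x - 2|)

lemma tent_cont (n : ℕ) : Continuous (tent n) := by unfold tent; fun_prop

lemma tent_le (n : ℕ) (x : ℝ) : tent n x ≤ tent 0 x := by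
  unfold tent
  apply max_le_max le_rfl
  have : 0 ≤ (n:ℝ) * |x-2| := by positivity
  push_cast; linarith

lemma tent_nonneg (n : ℕ) (x : ℝ) : 0 ≤ tent n x := le_max_left _ _

lemma tent_far (n : ℕ) (x : ℝ) (h : 1 ≤ |x - 2|) : tent n x = 0 := by
  apply max_eq_left
  have : 0 ≤ (n:ℝ) * |x-2| := by positivity
  linarith

lemma tent_supp (n : ℕ) : HasCompactSupport (tent n) := by
  refine HasCompactSupport.intro (isCompact_closedBall (2:ℝ) 1) fun x hx => tent_far n x ?_
  rw [Metric.mem_closedBall, Real.dist_eq, not_le] at hx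
  exact hx.le

lemma tent_two (n : ℕ) : tent n 2 = 1 := by simp [tent]

lemma tent_int (n : ℕ) (z : ℤ) (hz : z ≠ 2) : tent n z = 0 := by
  apply tent_far
  have : (1:ℤ) ≤ |z - 2| := Int.one_le_abs (by omega)
  exact_mod_cast this

lemma autoCorr_tent (n m : ℕ) : autoCorr (FF m) (fun x => (tent n x : ℂ)) =
    (((UA (FF m)).ncard / (FF m).ncard : ℝ) : ℂ) := by
  classical
  have hF := FF_fin m
  have hin : ∀ x ∈ FF m, ∑ᶠ y ∈ FF m, ((tent n (x - y) : ℝ) : ℂ) =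
      if x - 2 ∈ FF m then 1 else 0 := by
    intro x hx
    rw [finsum_mem_eq_finite_toFinset_sum _ hF]
    have : ∀ y ∈ hF.toFinset, ((tent n (x - y) : ℝ) : ℂ) = if x - 2 = y then 1 else 0 := by
      intro y hy
      rw [hF.mem_toFinset] at hy
      split_ifs with h
      · subst h
        simp [tent_two]
      · obtain ⟨a, rfl, -⟩ := P2_int hx.1
        obtain ⟨b, rfl, -⟩ := P2_int hy.1
        have := tent_int n (a - b) (by
          intro h'
          apply h
          have : a - 2 = b := by omega
          exact_mod_cast this)
        push_cast at this
        rw [this]; simp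
    rw [Finset.sum_congr rfl this, Finset.sum_ite_eq]
    simp only [hF.mem_toFinset]
  unfold autoCorr
  rw [finsum_mem_congr rfl hin, finsum_mem_eq_finite_toFinset_sum _ hF, Finset.sum_boole]
  have : ((UA (FF m)).ncard) = (hF.toFinset.filter fun x => x - 2 ∈ FF m).card := by
    rw [← Set.ncard_coe_finset]
    congr 1
    ext x
    simp only [Finset.coe_filter, hF.mem_toFinset]
    rfl
  rw [this]
  push_cast
  rw [div_eq_inv_mul]

lemma gamma_lim (γ : Measure ℝ) [IsFiniteMeasureOnCompacts γ] :
    Tendsto (fun n => ∫ x, (tent n x : ℂ) ∂γ) atTop (𝓝 ((γ.real {(2:ℝ)} : ℝ) : ℂ)) := by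
  have h1 : ((γ.real {(2:ℝ)} : ℝ) : ℂ) = ∫ x, (Set.indicator {(2:ℝ)} (fun _ => (1:ℂ)) x) ∂γ := by
    rw [integral_indicator (measurableSet_singleton _)]
    simp [Measure.real]
  rw [h1]
  refine tendsto_integral_of_dominated_convergence (tent 0) ?_ ?_ ?_ ?_
  · intro n
    exact (Complex.continuous_ofReal.comp (tent_cont n)).aestronglyMeasurable
  · exact (tent_cont 0).integrable_of_hasCompactSupport (tent_supp 0)
  · intro n
    refine Eventually.of_forall fun x => ?_
    rw [Complex.norm_real, Real.norm_of_nonneg (tent_nonneg _ _)]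
    exact tent_le n x
  · refine Eventually.of_forall fun x => ?_
    by_cases hx : x = 2
    · subst hx
      simp [tent_two]
    · have hpos : 0 < |x - 2| := abs_pos.2 (sub_ne_zero.2 hx)
      have : Tendsto (fun n : ℕ => (n:ℝ)) atTop atTop := tendsto_natCast_atTop_atTop
      refine tendsto_const_nhds.congr' ?_
      filter_upwards [this.eventually_ge_atTop (1 / |x-2|)] with n hn
      have h2 : tent n x = 0 := by
        apply max_eq_left
        rw [div_le_iff₀ hpos] at hn
        linarith
      simp [h2, hx]

theorem twin_primes_autocorrelation_iff_infinitely_many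
    (nk : ℕ → ℕ) (hnk : StrictMono nk)
    (γ : Measure ℝ) [IsFiniteMeasureOnCompacts γ]
    (hconv : ∀ f : ℝ → ℂ, Continuous f → HasCompactSupport f →
      Tendsto (fun k => autoCorr (P2 ∩ Set.Icc (-(nk k : ℝ)) ((nk k : ℝ))) f) atTop
        (nhds (∫ x, f x ∂γ))) :
    γ {(2 : ℝ)} = 1/2 ↔ {p : ℕ | p.Prime ∧ (p + 2).Prime}.Infinite := by
  have hr : ∀ n, Tendsto (fun k => (((UA (FF (nk k))).ncard / (FF (nk k)).ncard : ℝ) : ℂ)) atTop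
      (𝓝 (∫ x, (tent n x : ℂ) ∂γ)) := by
    intro n
    refine (hconv (fun x => (tent n x : ℂ)) (Complex.continuous_ofReal.comp (tent_cont n))
      ((tent_supp n).comp_left Complex.ofReal_zero)).congr fun k => ?_
    exact autoCorr_tent n (nk k)
  have hconst : ∀ n, ∫ x, (tent n x : ℂ) ∂γ = ∫ x, (tent 0 x : ℂ) ∂γ := fun n =>
    tendsto_nhds_unique (hr n) (hr 0)
  have hγ : ((γ.real {(2:ℝ)} : ℝ) : ℂ) = ∫ x, (tent 0 x : ℂ) ∂γ :=
    tendsto_nhds_unique (gamma_lim γ) (tendsto_const_nhds.congr fun n => (hconst n).symm)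
  have hlim : Tendsto (fun k => ((UA (FF (nk k))).ncard / (FF (nk k)).ncard : ℝ)) atTop
      (𝓝 (γ.real {(2:ℝ)})) := by
    have := hr 0
    rw [← hγ] at this
    exact (Complex.continuous_re.tendsto _).comp this
  have hfin : γ {(2:ℝ)} ≠ ⊤ := isCompact_singleton.measure_lt_top.ne
  have hconvt : γ {(2:ℝ)} = 1/2 ↔ γ.real {(2:ℝ)} = 1/2 := by
    rw [Measure.real, ← ENNReal.toReal_eq_toReal_iff' hfin (by simp)]
    simp
  rw [hconvt, ← P2_inf_iff]
  constructor
  · intro h hF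
    have hs := P2_strict hF
    have hev : ∀ᶠ k in atTop, ((UA P2).ncard / P2.ncard : ℝ) =
        ((UA (FF (nk k))).ncard / (FF (nk k)).ncard : ℝ) := by
      filter_upwards [eventually_sub hF subset_rfl nk hnk] with k hk
      have : FF (nk k) = P2 := Set.inter_subset_left.antisymm hk
      rw [this]
    have h2 := tendsto_nhds_unique hlim (tendsto_const_nhds.congr' hev)
    rw [h] at h2
    have hpos : (0:ℝ) < P2.ncard := by
      have : P2.ncard ≠ 0 := by
        intro h0
        rw [h0] at h2
        norm_num at h2
      positivity
    rw [eq_div_iff hpos.ne'] at h2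
    have : (P2.ncard : ℝ) < 2 * (UA P2).ncard := by exact_mod_cast hs
    linarith
  · intro hI
    have hcard : Tendsto (fun k => ((FF (nk k)).ncard : ℝ)) atTop atTop := by
      refine tendsto_natCast_atTop_atTop.comp (tendsto_atTop.2 fun N => ?_)
      obtain ⟨t, ht, hc⟩ := hI.exists_subset_card_eq N
      filter_upwards [eventually_sub t.finite_toSet ht nk hnk] with k hk
      rw [← hc, ← Set.ncard_coe_finset]
      exact Set.ncard_le_ncard hk (FF_fin _)
    refine tendsto_nhds_unique hlim ?_
    have h4 : Tendsto (fun k => 2 / ((FF (nk k)).ncard : ℝ)) atTop (𝓝 0) :=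
      tendsto_const_nhds.div_atTop hcard
    have h5 := (tendsto_const_nhds (x := (1/2:ℝ))).sub h4
    have h6 := (tendsto_const_nhds (x := (1/2:ℝ))).add h4
    rw [sub_zero] at h5
    rw [add_zero] at h6
    refine tendsto_of_tendsto_of_tendsto_of_le_of_le' h5 h6 ?_ ?_
    · filter_upwards [hcard.eventually_gt_atTop 0] with k hk
      have := (FF_bounds (nk k)).2
      have : ((FF (nk k)).ncard : ℝ) ≤ 2 * (UA (FF (nk k))).ncard + 4 := by exact_mod_cast this
      rw [le_div_iff₀ hk, sub_mul, div_mul_cancel₀ _ hk.ne']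
      linarith
    · filter_upwards [hcard.eventually_gt_atTop 0] with k hk
      have := (FF_bounds (nk k)).1
      have : 2 * ((UA (FF (nk k))).ncard : ℝ) ≤ (FF (nk k)).ncard + 2 := by exact_mod_cast this
      rw [div_le_iff₀ hk, add_mul, div_mul_cancel₀ _ hk.ne']
      linarith
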